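/- There exist complete lattices X₁ and X₂ such that the Scott topology on the product X₁ × X₂ (equipped with the componentwise partial order) is strictly finer than the product topology of the Scott topology on X₁ and the Scott topology on X₂. -/

import Mathlib

/-- The Scott topology on `X₁ × X₂` (with the componentwise order) is strictly finer than the
product topology of the Scott topologies on the factors: every set open in the product
topology is Scott open, and some Scott open set is not open in the product topology. -/
def ScottStrictlyFinerThanProd (X₁ X₂ : Type) [Preorder X₁] [Preorder X₂] : Prop :=
  (∀ U : Set (X₁ × X₂),
      (@instTopologicalSpaceProd X₁ X₂ (Topology.scott X₁ Set.univ)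
        (Topology.scott X₂ Set.univ)).IsOpen U →
      (Topology.scott (X₁ × X₂) Set.univ).IsOpen U) ∧
  ∃ U : Set (X₁ × X₂), (Topology.scott (X₁ × X₂) Set.univ).IsOpen U ∧
    ¬ (@instTopologicalSpaceProd X₁ X₂ (Topology.scott X₁ Set.univ)
        (Topology.scott X₂ Set.univ)).IsOpen U

/-- The same property, stated for complete lattices. -/
def ScottStrictlyFinerThanProdCL (X₁ X₂ : Type) [CompleteLattice X₁] [CompleteLattice X₂] :
    Prop :=
  ScottStrictlyFinerThanProd X₁ X₂

section Helpers
open Set Topology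

lemma scott_open_iff {α : Type} [Preorder α] (s : Set α) :
    (Topology.scott α univ).IsOpen s ↔ IsUpperSet s ∧
      ∀ d : Set α, d.Nonempty → DirectedOn (· ≤ ·) d → ∀ a, IsLUB d a → a ∈ s →
        ∃ b ∈ d, b ∈ s := by
  letI := Topology.scott α univ
  haveI : IsScott α univ := ⟨rfl⟩
  have h := IsScott.isOpen_iff_isUpperSet_and_dirSupInaccOn (D := univ) (s := s)
  refine h.trans (and_congr Iff.rfl ⟨?_, ?_⟩)
  · intro h d h1 h2 a h3 h4
    obtain ⟨b, hb⟩ := h (mem_univ d) h1 h2 h3 h4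
    exact ⟨b, hb.1, hb.2⟩
  · intro h d _ h1 h2 a h3 h4
    obtain ⟨b, hb⟩ := h d h1 h2 a h3 h4
    exact ⟨b, hb.1, hb.2⟩

lemma prod_open_iff {α β : Type} (t₁ : TopologicalSpace α) (t₂ : TopologicalSpace β)
    (s : Set (α × β)) :
    (@instTopologicalSpaceProd α β t₁ t₂).IsOpen s ↔
      ∀ a b, (a, b) ∈ s → ∃ u v, t₁.IsOpen u ∧ t₂.IsOpen v ∧ a ∈ u ∧ b ∈ v ∧ u ×ˢ v ⊆ s :=
  isOpen_prod_iff

lemma dir_fst {α β : Type} [Preorder α] [Preorder β] {d : Set (α × β)}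
    (h : DirectedOn (· ≤ ·) d) : DirectedOn (· ≤ ·) (Prod.fst '' d) := by
  rintro _ ⟨p, hp, rfl⟩ _ ⟨q, hq, rfl⟩
  obtain ⟨r, hr, h1, h2⟩ := h p hp q hq
  exact ⟨r.1, ⟨r, hr, rfl⟩, h1.1, h2.1⟩

lemma dir_snd {α β : Type} [Preorder α] [Preorder β] {d : Set (α × β)}
    (h : DirectedOn (· ≤ ·) d) : DirectedOn (· ≤ ·) (Prod.snd '' d) := by
  rintro _ ⟨p, hp, rfl⟩ _ ⟨q, hq, rfl⟩
  obtain ⟨r, hr, h1, h2⟩ := h p hp q hq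
  exact ⟨r.2, ⟨r, hr, rfl⟩, h1.2, h2.2⟩

lemma scott_finer (α β : Type) [Preorder α] [Preorder β] (U : Set (α × β))
    (hU : (@instTopologicalSpaceProd α β (Topology.scott α Set.univ)
        (Topology.scott β Set.univ)).IsOpen U) :
    (Topology.scott (α × β) Set.univ).IsOpen U := by
  rw [prod_open_iff] at hU
  rw [scott_open_iff]
  constructor
  · rintro ⟨a, b⟩ ⟨a', b'⟩ hle hab
    obtain ⟨u, v, hu, hv, ha, hb, hs⟩ := hU a b hab
    rw [scott_open_iff] at hu hv
    exact hs ⟨hu.1 hle.1 ha, hv.1 hle.2 hb⟩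
  · rintro d hne hd ⟨a, b⟩ hl hab
    obtain ⟨u, v, hu, hv, ha, hb, hs⟩ := hU a b hab
    rw [scott_open_iff] at hu hv
    rw [isLUB_prod] at hl
    obtain ⟨_, ⟨p, hp, rfl⟩, hpu⟩ := hu.2 _ (hne.image _) (dir_fst hd) _ hl.1 ha
    obtain ⟨_, ⟨q, hq, rfl⟩, hqv⟩ := hv.2 _ (hne.image _) (dir_snd hd) _ hl.2 hb
    obtain ⟨r, hr, h1, h2⟩ := hd p hp q hq
    exact ⟨r, hr, hs ⟨hu.1 h1.1 hpu, hv.1 h2.2 hqv⟩⟩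

/-- Countably many copies of `ℕ` with a common bottom and a common top. -/
inductive Fan : Type
  | bot : Fan
  | el : ℕ → ℕ → Fan
  | top : Fan

namespace Fan

/-- The order of the fan. -/
def le : Fan → Fan → Prop
  | bot, _ => True
  | el _ _, bot => False
  | el i n, el j m => i = j ∧ n ≤ m
  | el _ _, top => True
  | top, bot => False
  | top, el _ _ => False
  | top, top => True

instance : PartialOrder Fan where
  le := le
  le_refl a := by cases a <;> simp [le]
  le_trans a b c := by
    cases a <;> cases b <;> cases c <;> simp [le] <;> omega
  le_antisymm a b := by
    cases a <;> cases b <;> simp [le] <;> omega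

@[simp] lemma bot_le' (a : Fan) : bot ≤ a := by cases a <;> exact trivial
@[simp] lemma le_top' (a : Fan) : a ≤ top := by cases a <;> exact trivial
@[simp] lemma el_le_bot (i n) : ¬ el i n ≤ bot := fun h => h
@[simp] lemma top_le_bot : ¬ top ≤ bot := fun h => h
@[simp] lemma top_le_el (i n) : ¬ top ≤ el i n := fun h => h
@[simp] lemma el_le_el (i n j m) : el i n ≤ el j m ↔ i = j ∧ n ≤ m := Iff.rfl

lemma exists_lub (s : Set Fan) : ∃ a, IsLUB s a := by
  classical
  by_cases hb : bot ∈ upperBounds s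
  · exact ⟨bot, hb, fun _ _ => bot_le' _⟩
  by_cases he : ∃ i n, el i n ∈ upperBounds s
  · obtain ⟨i, hi⟩ := he
    refine ⟨el i (Nat.find hi), Nat.find_spec hi, ?_⟩
    have hx : ∃ n, el i n ∈ s := by
      by_contra hc
      push Not at hc
      apply hb
      intro x hx
      have h1 := Nat.find_spec hi hx
      cases x with
      | bot => simp
      | top => simp at h1
      | el j m =>
        rw [el_le_el] at h1
        obtain ⟨rfl, _⟩ := h1
        exact absurd hx (hc _)
    obtain ⟨n, hn⟩ := hx
    intro c hc
    cases c with
    | bot => exact absurd hc hb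
    | top => simp
    | el j m =>
      have h1 := hc hn
      rw [el_le_el] at h1
      obtain ⟨rfl, _⟩ := h1
      exact ⟨rfl, Nat.find_min' hi hc⟩
  · refine ⟨top, fun _ _ => le_top' _, ?_⟩
    intro c hc
    cases c with
    | bot => exact absurd hc hb
    | top => simp
    | el j m => exact absurd ⟨j, m, hc⟩ he

noncomputable instance : SupSet Fan := ⟨fun s => (exists_lub s).choose⟩

noncomputable instance : CompleteLattice Fan :=
  completeLatticeOfSup Fan fun s => (exists_lub s).choose_spec

lemma dir_lub {d : Set Fan} (hne : d.Nonempty) (hd : DirectedOn (· ≤ ·) d) {a : Fan}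
    (ha : IsLUB d a) : a ∈ d ∨ (a = top ∧ ∃ i, ∀ N, ∃ n, N ≤ n ∧ el i n ∈ d) := by
  by_cases had : a ∈ d
  · exact Or.inl had
  right
  cases a with
  | bot =>
    obtain ⟨x, hx⟩ := hne
    have h1 := ha.1 hx
    cases x with
    | bot => exact absurd hx had
    | el i n => simp at h1
    | top => simp at h1
  | el i n =>
    exfalso
    cases n with
    | zero =>
      refine el_le_bot i 0 (ha.2 ?_)
      intro x hx
      have h1 := ha.1 hx
      cases x with
      | bot => simp
      | top => simp at h1
      | el j m =>
        obtain ⟨rfl, h2⟩ := h1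
        obtain rfl : m = 0 := by omega
        exact absurd hx had
    | succ n =>
      have : el i (n+1) ≤ el i n := by
        refine ha.2 ?_
        intro x hx
        have h1 := ha.1 hx
        cases x with
        | bot => simp
        | top => simp at h1
        | el j m =>
          obtain ⟨rfl, h2⟩ := h1
          refine ⟨rfl, ?_⟩
          by_contra hc
          obtain rfl : m = n + 1 := by omega
          exact absurd hx had
      simp at this
  | top =>
    refine ⟨rfl, ?_⟩
    have hx : ∃ i n, el i n ∈ d := by
      by_contra hc
      push Not at hc
      refine top_le_bot (ha.2 ?_)
      intro x hx
      cases x with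
      | bot => simp
      | top => exact absurd hx had
      | el j m => exact absurd hx (hc _ _)
    obtain ⟨i, n, hin⟩ := hx
    refine ⟨i, fun N => ?_⟩
    by_contra hc
    push Not at hc
    refine top_le_el i N (ha.2 ?_)
    intro x hx
    cases x with
    | bot => simp
    | top => exact absurd hx had
    | el j m =>
      obtain ⟨z, hz, h1, h2⟩ := hd _ hin _ hx
      cases z with
      | bot => simp at h1
      | top => exact absurd hz had
      | el k l =>
        obtain ⟨rfl, h1⟩ := h1
        obtain ⟨rfl, h2⟩ := h2
        refine ⟨rfl, ?_⟩
        by_contra h3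
        exact hc m (by omega) hx

/-- The set of points above the threshold given by `P`. -/
def nb (P : ℕ → ℕ → Prop) : Set Fan
  | bot => False
  | el i n => P i n
  | top => True

lemma nb_open (P : ℕ → ℕ → Prop) (hP : ∀ i n m, n ≤ m → P i n → P i m)
    (hP' : ∀ i, ∃ n, P i n) : (Topology.scott Fan univ).IsOpen (nb P) := by
  rw [scott_open_iff]
  constructor
  · intro a b hab ha
    cases a with
    | bot => exact ha.elim
    | top =>
      cases b with
      | bot => simp at hab
      | el i n => simp at hab
      | top => trivial
    | el i n =>
      cases b with
      | bot => simp at hab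
      | top => trivial
      | el j m =>
        obtain ⟨rfl, h⟩ := hab
        exact hP _ _ _ h ha
  · intro d hne hd a ha has
    rcases dir_lub hne hd ha with h | ⟨_, i, hi⟩
    · exact ⟨a, h, has⟩
    · obtain ⟨n, hn⟩ := hP' i
      obtain ⟨m, hm, hmd⟩ := hi n
      exact ⟨_, hmd, hP _ _ _ hm hn⟩

lemma top_lub (i : ℕ) : IsLUB (range (el i)) top := by
  refine ⟨fun _ _ => le_top' _, ?_⟩
  intro c hc
  cases c with
  | bot => exact absurd (hc ⟨0, rfl⟩) (el_le_bot i 0)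
  | top => simp
  | el j m =>
    have := (hc ⟨m+1, rfl⟩).2
    omega

lemma open_top {V : Set Fan} (hV : (Topology.scott Fan univ).IsOpen V) (h : top ∈ V) (i : ℕ) :
    ∃ n, el i n ∈ V := by
  rw [scott_open_iff] at hV
  obtain ⟨_, ⟨n, rfl⟩, hn⟩ := hV.2 (range (el i)) ⟨_, 0, rfl⟩ (by
    rintro _ ⟨n, rfl⟩ _ ⟨m, rfl⟩
    exact ⟨_, ⟨max n m, rfl⟩, ⟨rfl, le_max_left _ _⟩, ⟨rfl, le_max_right _ _⟩⟩) _ (top_lub i) h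
  exact ⟨n, hn⟩

/-- The Scott opens of the fan. -/
abbrev Op : Type := @TopologicalSpace.Opens Fan (Topology.scott Fan univ)

/-- The membership relation. -/
def E : Set (Fan × Op) := {p | p.1 ∈ @TopologicalSpace.Opens.carrier Fan (Topology.scott Fan univ) p.2}

lemma E_open : (Topology.scott (Fan × Op) univ).IsOpen E := by
  letI : TopologicalSpace Fan := Topology.scott Fan univ
  have hup : ∀ U : Op, IsUpperSet U.carrier := fun U => ((scott_open_iff _).1 U.is_open').1
  rw [scott_open_iff]
  constructor
  · rintro ⟨a, U⟩ ⟨b, V⟩ hle h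
    exact hle.2 (hup U hle.1 h)
  · rintro d hne hd ⟨a, U⟩ hl h
    rw [isLUB_prod] at hl
    obtain ⟨_, ⟨p, hp, rfl⟩, hpu⟩ :=
      ((scott_open_iff _).1 U.is_open').2 _ (hne.image _) (dir_fst hd) _ hl.1 h
    have hU : U = sSup (Prod.snd '' d) := hl.2.sSup_eq.symm
    have hpu' : p.1 ∈ U := hpu
    rw [hU, TopologicalSpace.Opens.mem_sSup] at hpu'
    obtain ⟨_, ⟨q, hq, rfl⟩, hqv⟩ := hpu'
    obtain ⟨r, hr, h1, h2⟩ := hd p hp q hq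
    exact ⟨r, hr, hup r.2 h1.1 (h2.2 hqv)⟩

lemma E_not_open : ¬ (@instTopologicalSpaceProd Fan Op (Topology.scott Fan Set.univ)
        (Topology.scott Op Set.univ)).IsOpen E := by
  letI : TopologicalSpace Fan := Topology.scott Fan univ
  intro hE
  rw [prod_open_iff] at hE
  let V0 : Op := ⟨nb fun _ _ => True, nb_open _ (by simp) (by simp)⟩
  obtain ⟨V, W, hV, hW, htV, hVW, hs⟩ := hE top V0 trivial
  choose g hg using open_top hV htV
  let O : ℕ → Op := fun k => ⟨nb fun i n => i ≤ k ∨ g i < n,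
    nb_open _ (fun i n m h => by omega) (fun i => ⟨g i + 1, by omega⟩)⟩
  have hO : Monotone O := by
    intro k l hkl x hx
    cases x with
    | bot => exact hx.elim
    | top => trivial
    | el i n =>
      have hx' : i ≤ k ∨ g i < n := hx
      change i ≤ l ∨ g i < n
      omega
  have hlub : IsLUB (range O) V0 := by
    constructor
    · rintro _ ⟨k, rfl⟩ x hx
      cases x with
      | bot => exact hx.elim
      | top => trivial
      | el i n => trivial
    · intro U hU x hx
      cases x with
      | bot => exact hx.elim
      | top => exact hU ⟨0, rfl⟩ (show top ∈ nb _ from trivial)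
      | el i n => exact hU ⟨i, rfl⟩ (show i ≤ i ∨ g i < n from Or.inl le_rfl)
  rw [scott_open_iff] at hW
  obtain ⟨_, ⟨k, rfl⟩, hk⟩ := hW.2 (range O) ⟨_, 0, rfl⟩ (by
    rintro _ ⟨n, rfl⟩ _ ⟨m, rfl⟩
    exact ⟨_, ⟨max n m, rfl⟩, hO (le_max_left _ _), hO (le_max_right _ _)⟩) _ hlub hVW
  have hbad : k + 1 ≤ k ∨ g (k+1) < g (k+1) := hs (mk_mem_prod (hg (k+1)) hk)
  omega

end Fan

end Helpers

/-- There exist complete lattices `X₁` and `X₂` such that the Scott topology on the product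
`X₁ × X₂` (with the componentwise partial order) is strictly finer than the product topology
of the Scott topology on `X₁` and the Scott topology on `X₂`. -/
theorem stmt_3 : ∃ (X₁ X₂ : Type) (c₁ : CompleteLattice X₁) (c₂ : CompleteLattice X₂),
    @ScottStrictlyFinerThanProdCL X₁ X₂ c₁ c₂ := by
  exact ⟨Fan, Fan.Op, inferInstance, inferInstance, scott_finer _ _, Fan.E, Fan.E_open,
    Fan.E_not_open⟩
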